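/- arXiv:1908.01223 — 10 statements merged into one kernel-verified Lean document; each statement's English description precedes it below -/
import Mathlib

section
/- Let G be a P4-sparse graph with at least 2 vertices. Then exactly one of the following holds: (1) G is not connected; (2) the complement of G is not connected; (3) G is a spider. -/
open SimpleGraph

variable {V : Type*}

/-- `a, b, c, d` form an induced path on four vertices (a `P4`) in `G`. -/
def IsP4 (G : SimpleGraph V) (a b c d : V) : Prop :=
  a ≠ b ∧ a ≠ c ∧ a ≠ d ∧ b ≠ c ∧ b ≠ d ∧ c ≠ d ∧
    G.Adj a b ∧ G.Adj b c ∧ G.Adj c d ∧ ¬G.Adj a c ∧ ¬G.Adj a d ∧ ¬G.Adj b d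

/-- A graph is a cograph if it contains no induced `P4`. -/
def IsCograph (G : SimpleGraph V) : Prop :=
  ∀ a b c d : V, ¬IsP4 G a b c d

/-- The vertex set `A` induces a `P4` in `G`. -/
def InducesP4 (G : SimpleGraph V) (A : Set V) : Prop :=
  ∃ a b c d : V, IsP4 G a b c d ∧ A = {a, b, c, d}

/-- `G` is `P4`-sparse: every set of five vertices induces at most one `P4`. -/
def P4Sparse (G : SimpleGraph V) : Prop :=
  ∀ s : Set V, s.ncard = 5 →
    ∀ A B : Set V, A ⊆ s → B ⊆ s → InducesP4 G A → InducesP4 G B → A = B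

/-- `F` is a deletion set of `G`: a set of edges of `G` whose removal yields a cograph. -/
def IsDeletionSet (G : SimpleGraph V) (F : Set (Sym2 V)) : Prop :=
  F ⊆ G.edgeSet ∧ IsCograph (G.deleteEdges F)

/-- The minimum size of a deletion set of `G`. -/
noncomputable def cographAlpha (G : SimpleGraph V) : ℕ :=
  sInf {n | ∃ F : Set (Sym2 V), IsDeletionSet G F ∧ F.ncard = n}


/-- `S, K, R` is a spider partition of the vertices of `G`. -/
def IsSpiderPartition (G : SimpleGraph V) (S K R : Set V) : Prop :=
  S ∪ K ∪ R = Set.univ ∧ Disjoint S K ∧ Disjoint S R ∧ Disjoint K R ∧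
  S.ncard = K.ncard ∧ 2 ≤ K.ncard ∧
  (∀ u ∈ S, ∀ v ∈ S, u ≠ v → ¬G.Adj u v) ∧
  (∀ u ∈ K, ∀ v ∈ K, u ≠ v → G.Adj u v) ∧
  (∀ r ∈ R, ∀ k ∈ K, G.Adj r k) ∧
  (∀ r ∈ R, ∀ s ∈ S, ¬G.Adj r s) ∧
  ∃ φ : S ≃ K,
    (∀ s : S, G.neighborSet s ∩ K = {(φ s : V)}) ∨
    (∀ s : S, G.neighborSet s ∩ K = K \ {(φ s : V)})

/-- `G` is a spider. -/
def IsSpider (G : SimpleGraph V) : Prop :=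
  ∃ S K R : Set V, IsSpiderPartition G S K R

universe u

lemma IsP4.of_adj {G : SimpleGraph V} {a b c d : V} (hab : G.Adj a b) (hbc : G.Adj b c)
    (hcd : G.Adj c d) (hac : ¬G.Adj a c) (had : ¬G.Adj a d) (hbd : ¬G.Adj b d) :
    IsP4 G a b c d := by
  refine ⟨hab.ne, ?_, ?_, hbc.ne, ?_, hcd.ne, hab, hbc, hcd, hac, had, hbd⟩
  · rintro rfl; exact had hcd
  · rintro rfl; exact hac hcd.symm
  · rintro rfl; exact had hab

/-- Every vertex outside an induced path `a, b, c, d` is adjacent to none of its vertices,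
to exactly the two midpoints, or to all four vertices. -/
def RespectsP4 (G : SimpleGraph V) : Prop :=
  ∀ a b c d x : V, IsP4 G a b c d → x ≠ a → x ≠ b → x ≠ c → x ≠ d →
    (¬G.Adj x a ∧ ¬G.Adj x b ∧ ¬G.Adj x c ∧ ¬G.Adj x d) ∨
    (¬G.Adj x a ∧ G.Adj x b ∧ G.Adj x c ∧ ¬G.Adj x d) ∨
    (G.Adj x a ∧ G.Adj x b ∧ G.Adj x c ∧ G.Adj x d)

lemma P4Sparse.not_isP4 {G : SimpleGraph V} (hG : P4Sparse G) {a b c d x : V}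
    (h : IsP4 G a b c d) (hxa : x ≠ a) (hxb : x ≠ b) (hxc : x ≠ c) (hxd : x ≠ d)
    {p q r t : V} (hsub : ({p, q, r, t} : Set V) ⊆ {x, a, b, c, d})
    (hx : x ∈ ({p, q, r, t} : Set V)) : ¬IsP4 G p q r t := by
  intro h'
  have hcard : ({x, a, b, c, d} : Set V).ncard = 5 := by
    classical
    obtain ⟨h1, h2, h3, h4, h5, h6, -⟩ := h
    have : ({x, a, b, c, d} : Set V) = (({x, a, b, c, d} : Finset V) : Set V) := by simp
    rw [this, Set.ncard_coe_finset]
    simp [Finset.card_insert_of_notMem, *]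
  have := hG _ hcard _ _ hsub (Set.subset_insert x _) ⟨p, q, r, t, h', rfl⟩ ⟨a, b, c, d, h, rfl⟩
  rw [this] at hx
  simp_all

lemma P4Sparse.respectsP4 {G : SimpleGraph V} (hG : P4Sparse G) : RespectsP4 G := by
  intro a b c d x h hxa hxb hxc hxd
  have key : ∀ {p q r t : V}, ({p, q, r, t} : Set V) ⊆ {x, a, b, c, d} →
      x ∈ ({p, q, r, t} : Set V) → G.Adj p q → G.Adj q r → G.Adj r t → ¬G.Adj p r →
      ¬G.Adj p t → ¬G.Adj q t → False := fun hsub hx h1 h2 h3 h4 h5 h6 =>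
    hG.not_isP4 h hxa hxb hxc hxd hsub hx (.of_adj h1 h2 h3 h4 h5 h6)
  have h_xabc := @key x a b c (by simp [Set.insert_subset_iff]) (by simp)
  have h_xbcd := @key x b c d (by simp [Set.insert_subset_iff]) (by simp)
  have h_xcba := @key x c b a (by simp [Set.insert_subset_iff]) (by simp)
  have h_xdcb := @key x d c b (by simp [Set.insert_subset_iff]) (by simp)
  have h_axcd := @key a x c d (by simp [Set.insert_subset_iff]) (by simp)
  have h_dxba := @key d x b a (by simp [Set.insert_subset_iff]) (by simp)
  have h_axdc := @key a x d c (by simp [Set.insert_subset_iff]) (by simp)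
  have h_dxab := @key d x a b (by simp [Set.insert_subset_iff]) (by simp)
  obtain ⟨-, -, -, -, -, -, h1, h2, h3, h4, h5, h6⟩ := h
  clear key
  simp only [G.adj_comm a x, G.adj_comm d x, G.adj_comm b a, G.adj_comm c b, G.adj_comm d c,
    G.adj_comm c a, G.adj_comm d a, G.adj_comm d b] at *
  clear hG
  grind

lemma IsP4.compl {G : SimpleGraph V} {a b c d : V} (h : IsP4 Gᶜ a b c d) :
    IsP4 G b d a c := by
  simp only [IsP4, compl_adj] at h
  refine .of_adj ?_ ?_ ?_ ?_ ?_ ?_ <;> grind [SimpleGraph.adj_comm]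

lemma RespectsP4.compl {G : SimpleGraph V} (hG : RespectsP4 G) : RespectsP4 Gᶜ := by
  intro a b c d x h ha hb hc hd
  have := hG b d a c x h.compl hb hd ha hc
  simp only [compl_adj]
  tauto

/-- The vertices `s i`, `k i` and the set `R` form a spider, with legs joining each `s i` either
to `k i` alone or to every `k j` with `j ≠ i`. -/
structure IsSpiderFrame {ι : Type*} (G : SimpleGraph V) (s k : ι → V) (R : Set V) : Prop where
  indep : ∀ i j, ¬G.Adj (s i) (s j)
  clique : ∀ i j, i ≠ j → G.Adj (k i) (k j)
  head_adj : ∀ r ∈ R, ∀ i, G.Adj r (k i)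
  head_not_adj : ∀ r ∈ R, ∀ i, ¬G.Adj r (s i)
  legs : (∀ i j, G.Adj (s i) (k j) ↔ i = j) ∨ (∀ i j, G.Adj (s i) (k j) ↔ i ≠ j)

namespace IsSpiderFrame

variable {ι : Type*} {G : SimpleGraph V} {s k : ι → V} {R : Set V}

lemma injective_body (h : IsSpiderFrame G s k R) : Function.Injective k := by
  intro i j hij
  by_contra hne
  exact (h.clique i j hne).ne hij

lemma injective_feet (h : IsSpiderFrame G s k R) : Function.Injective s := by
  intro i j hij
  rcases h.legs with hl | hl
  · exact ((hl j i).1 (hij ▸ (hl i i).2 rfl)).symm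
  · by_contra hne
    exact (hl j j).1 (hij ▸ (hl i j).2 hne) rfl

lemma feet_ne_body [Nontrivial ι] (h : IsSpiderFrame G s k R) (i j : ι) : s i ≠ k j := by
  intro hij
  rcases h.legs with hl | hl
  · by_cases hne : i = j
    · subst hne
      exact ((hl i i).2 rfl).ne hij
    · exact h.indep j i (hij ▸ (hl j j).2 rfl)
  · by_cases hne : i = j
    · subst hne
      obtain ⟨l, hli⟩ := exists_ne i
      exact h.indep l i (hij ▸ (hl l i).2 hli)
    · exact ((hl i j).2 hne).ne hij

lemma exists_leg [Nontrivial ι] (h : IsSpiderFrame G s k R) (i : ι) :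
    ∃ j, G.Adj (s i) (k j) := by
  rcases h.legs with hl | hl
  · exact ⟨i, (hl i i).2 rfl⟩
  · obtain ⟨j, hj⟩ := exists_ne i
    exact ⟨j, (hl i j).2 hj.symm⟩

lemma exists_not_leg [Nontrivial ι] (h : IsSpiderFrame G s k R) (i : ι) :
    ∃ j, ¬G.Adj (s i) (k j) := by
  rcases h.legs with hl | hl
  · obtain ⟨j, hj⟩ := exists_ne i
    exact ⟨j, fun e => hj.symm ((hl i j).1 e)⟩
  · exact ⟨i, fun e => (hl i i).1 e rfl⟩

lemma head_ne_body (h : IsSpiderFrame G s k R) {r : V} (hr : r ∈ R) (i : ι) : r ≠ k i :=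
  (h.head_adj r hr i).ne

lemma head_ne_feet [Nontrivial ι] (h : IsSpiderFrame G s k R) {r : V} (hr : r ∈ R) (i : ι) :
    r ≠ s i := by
  rintro rfl
  obtain ⟨j, hj⟩ := h.exists_not_leg i
  exact hj (h.head_adj _ hr j)

lemma compl [Nontrivial ι] (h : IsSpiderFrame G s k R) : IsSpiderFrame Gᶜ k s R where
  indep i j := by
    rw [compl_adj]
    rintro ⟨hne, hadj⟩
    exact hadj (h.clique i j fun e => hne (e ▸ rfl))
  clique i j hij := (compl_adj ..).2 ⟨h.injective_feet.ne hij, h.indep i j⟩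
  head_adj r hr i := (compl_adj ..).2 ⟨h.head_ne_feet hr i, h.head_not_adj r hr i⟩
  head_not_adj r hr i hadj := ((compl_adj ..).1 hadj).2 (h.head_adj r hr i)
  legs := by
    have hne := h.feet_ne_body
    rcases h.legs with hl | hl
    · right
      intro i j
      rw [compl_adj, G.adj_comm, hl]
      exact ⟨fun e => Ne.symm e.2, fun e => ⟨(hne j i).symm, e.symm⟩⟩
    · left
      intro i j
      rw [compl_adj, G.adj_comm, hl]
      exact ⟨fun e => (not_not.1 e.2).symm, fun e => ⟨(hne j i).symm, not_not.2 e.symm⟩⟩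

/-- A vertex off the legs of a spider is adjacent to all leg vertices, to none of them, or
to the body only. -/
lemma adj_legs (hG : RespectsP4 G) [Nontrivial ι] (h : IsSpiderFrame G s k R) {x : V}
    (hs : ∀ i, x ≠ s i) (hk : ∀ i, x ≠ k i) :
    (∀ i, G.Adj x (s i) ∧ G.Adj x (k i)) ∨ (∀ i, ¬G.Adj x (s i) ∧ ¬G.Adj x (k i)) ∨
      (∀ i, ¬G.Adj x (s i) ∧ G.Adj x (k i)) := by
  have key : ∀ i j, i ≠ j →
      (¬G.Adj x (s i) ∧ ¬G.Adj x (k i) ∧ ¬G.Adj x (s j) ∧ ¬G.Adj x (k j)) ∨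
      (¬G.Adj x (s i) ∧ G.Adj x (k i) ∧ ¬G.Adj x (s j) ∧ G.Adj x (k j)) ∨
      (G.Adj x (s i) ∧ G.Adj x (k i) ∧ G.Adj x (s j) ∧ G.Adj x (k j)) := by
    intro i j hij
    rcases h.legs with hl | hl
    · have hP : IsP4 G (s i) (k i) (k j) (s j) :=
        .of_adj ((hl i i).2 rfl) (h.clique i j hij) ((hl j j).2 rfl).symm
          (fun e => hij ((hl i j).1 e)) (h.indep i j) (fun e => hij ((hl j i).1 e.symm).symm)
      have := hG _ _ _ _ x hP (hs i) (hk i) (hk j) (hs j)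
      tauto
    · have hP : IsP4 G (s i) (k j) (k i) (s j) :=
        .of_adj ((hl i j).2 hij) (h.clique j i hij.symm) ((hl j i).2 hij.symm).symm
          (fun e => (hl i i).1 e rfl) (h.indep i j) (fun e => (hl j j).1 e.symm rfl)
      have := hG _ _ _ _ x hP (hs i) (hk j) (hk i) (hs j)
      tauto
  obtain ⟨i, j, hij⟩ := exists_pair_ne ι
  have h0 := key i j hij
  by_cases hsi : G.Adj x (s i)
  · left
    intro l
    by_cases hl : i = l
    · subst hl; tauto
    · have := key i l hl
      tauto
  · right
    by_cases hki : G.Adj x (k i)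
    · right
      intro l
      by_cases hl : i = l
      · subst hl; tauto
      · have := key i l hl
        tauto
    · left
      intro l
      by_cases hl : i = l
      · subst hl; tauto
      · have := key i l hl
        tauto

end IsSpiderFrame

/-- The vertex set `H` induces a spider in `G`. -/
def InducesSpider {V : Type u} (G : SimpleGraph V) (H : Set V) : Prop :=
  ∃ (ι : Type u) (_ : Nontrivial ι) (s k : ι → V) (R : Set V),
    IsSpiderFrame G s k R ∧ H = Set.range s ∪ Set.range k ∪ R

section InducesSpider

variable {V : Type u} {G : SimpleGraph V} {H : Set V}

lemma InducesSpider.compl (h : InducesSpider G H) : InducesSpider Gᶜ H := by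
  obtain ⟨ι, _, s, k, R, hf, rfl⟩ := h
  exact ⟨ι, ‹_›, k, s, R, hf.compl, by rw [Set.union_comm (Set.range k)]⟩

lemma inducesSpider_compl : InducesSpider Gᶜ H ↔ InducesSpider G H :=
  ⟨fun h => compl_compl G ▸ h.compl, fun h => h.compl⟩

lemma InducesSpider.nontrivial (h : InducesSpider G H) : H.Nontrivial := by
  obtain ⟨ι, _, s, k, R, hf, rfl⟩ := h
  obtain ⟨i⟩ : Nonempty ι := inferInstance
  exact ⟨s i, by simp, k i, by simp, hf.feet_ne_body i i⟩

lemma InducesSpider.connected (h : InducesSpider G Set.univ) : G.Connected := by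
  obtain ⟨ι, _, s, k, R, hf, hH⟩ := h
  obtain ⟨i⟩ : Nonempty ι := inferInstance
  have hk : ∀ j, G.Reachable (k i) (k j) := fun j => by
    by_cases hij : i = j
    · rw [hij]
    · exact (hf.clique i j hij).reachable
  rw [connected_iff_exists_forall_reachable]
  refine ⟨k i, fun x => ?_⟩
  have hx : x ∈ Set.range s ∪ Set.range k ∪ R := hH ▸ Set.mem_univ x
  rcases hx with (⟨j, rfl⟩ | ⟨j, rfl⟩) | hx
  · obtain ⟨l, hl⟩ := hf.exists_leg j
    exact (hk l).trans hl.symm.reachable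
  · exact hk j
  · exact (hf.head_adj x hx i).symm.reachable

lemma inducesSpider_univ_of_isSpider (h : IsSpider G) [Finite V] :
    InducesSpider G Set.univ := by
  obtain ⟨S, K, R, hU, hSK, hSR, hKR, hc, hc2, hS, hK, hRK, hRS, φ, hφ⟩ := h
  have hnt : Nontrivial S := by
    rw [← hc, ← Nat.card_coe_set_eq] at hc2
    exact Finite.one_lt_card_iff_nontrivial.1 hc2
  have hmem : ∀ (i : S) (j : S), G.Adj (i : V) (φ j) ↔
      (φ j : V) ∈ G.neighborSet (i : V) ∩ K := fun i j => by simp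
  have hinj : ∀ i j : S, (φ j : V) = φ i ↔ i = j := fun i j => by
    rw [Subtype.coe_inj, φ.apply_eq_iff_eq, eq_comm]
  refine ⟨S, hnt, Subtype.val, fun i => φ i, R, ⟨?_, ?_, ?_, ?_, ?_⟩, ?_⟩
  · intro i j hadj
    exact hS i i.2 j j.2 hadj.ne hadj
  · intro i j hij
    exact hK _ (φ i).2 _ (φ j).2 fun e => hij ((hinj _ _).1 e).symm
  · exact fun r hr i => hRK r hr _ (φ i).2
  · exact fun r hr i => hRS r hr _ i.2
  · rcases hφ with hφ | hφ
    · left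
      intro i j
      rw [hmem, hφ, Set.mem_singleton_iff, hinj]
    · right
      intro i j
      rw [hmem, hφ, Set.mem_sdiff, Set.mem_singleton_iff, hinj]
      exact and_iff_right (φ j).2
  · have : Set.range (fun i => (φ i : V)) = K := by
      ext x
      exact ⟨by rintro ⟨i, rfl⟩; exact (φ i).2, fun hx => ⟨φ.symm ⟨x, hx⟩, by simp⟩⟩
    rw [this, Subtype.range_coe, hU]

lemma InducesSpider.isSpider [Finite V] (h : InducesSpider G Set.univ) : IsSpider G := by
  obtain ⟨ι, _, s, k, R, hf, hH⟩ := h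
  have : Finite ι := Finite.of_injective s hf.injective_feet
  have hcard : ∀ f : ι → V, Function.Injective f → (Set.range f).ncard = Nat.card ι :=
    fun f hfi => by rw [← Set.image_univ, Set.ncard_image_of_injective _ hfi, Set.ncard_univ]
  let φ : Set.range s ≃ Set.range k :=
    (Equiv.ofInjective s hf.injective_feet).symm.trans (Equiv.ofInjective k hf.injective_body)
  have hφ : ∀ i, (φ ⟨s i, i, rfl⟩ : V) = k i := fun i => by
    simp [φ, Equiv.ofInjective_symm_apply]
  refine ⟨Set.range s, Set.range k, R, hH.symm, ?_, ?_, ?_, ?_, ?_, ?_, ?_, ?_, ?_, φ, ?_⟩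
  · rw [Set.disjoint_left]
    rintro _ ⟨i, rfl⟩ ⟨j, hj⟩
    exact hf.feet_ne_body i j hj.symm
  · rw [Set.disjoint_left]
    rintro _ ⟨i, rfl⟩ hr
    exact hf.head_ne_feet hr i rfl
  · rw [Set.disjoint_left]
    rintro _ ⟨i, rfl⟩ hr
    exact hf.head_ne_body hr i rfl
  · rw [hcard s hf.injective_feet, hcard k hf.injective_body]
  · rw [hcard k hf.injective_body]
    exact Finite.one_lt_card
  · rintro _ ⟨i, rfl⟩ _ ⟨j, rfl⟩ -
    exact hf.indep i j
  · rintro _ ⟨i, rfl⟩ _ ⟨j, rfl⟩ hne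
    exact hf.clique i j fun e => hne (e ▸ rfl)
  · rintro r hr _ ⟨i, rfl⟩
    exact hf.head_adj r hr i
  · rintro r hr _ ⟨i, rfl⟩
    exact hf.head_not_adj r hr i
  · refine hf.legs.imp ?_ ?_
    · rintro hl ⟨_, i, rfl⟩
      rw [hφ]
      ext x
      simp only [Set.mem_inter_iff, mem_neighborSet, Set.mem_singleton_iff]
      constructor
      · rintro ⟨hadj, j, rfl⟩
        rw [(hl i j).1 hadj]
      · rintro rfl
        exact ⟨(hl i i).2 rfl, i, rfl⟩
    · rintro hl ⟨_, i, rfl⟩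
      rw [hφ]
      ext x
      simp only [Set.mem_inter_iff, mem_neighborSet, Set.mem_sdiff, Set.mem_singleton_iff]
      constructor
      · rintro ⟨hadj, j, rfl⟩
        exact ⟨⟨j, rfl⟩, fun e => (hl i j).1 hadj (hf.injective_body e).symm⟩
      · rintro ⟨⟨j, rfl⟩, hne⟩
        exact ⟨(hl i j).2 fun e => hne (e ▸ rfl), j, rfl⟩

/-- A vertex adjacent to all the legs of a spider but not to its whole head can be added to it. -/
lemma IsSpiderFrame.inducesSpider_insert {ι : Type u} [Nontrivial ι] {s k : ι → V} {R : Set V}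
    (hG : RespectsP4 G) (h : IsSpiderFrame G s k R) {x m : V}
    (hx : ∀ i, G.Adj x (s i) ∧ G.Adj x (k i)) (hm : m ∈ R) (hxm : ¬G.Adj x m) :
    InducesSpider G (insert x (Set.range s ∪ Set.range k ∪ R)) := by
  classical
  wlog hl : ∀ i j, G.Adj (s i) (k j) ↔ i ≠ j generalizing k
  · have hthin := h.legs.resolve_right hl
    obtain ⟨i, j, hij⟩ := exists_pair_ne ι
    have hP : IsP4 G m (k i) x (s j) :=
      .of_adj (h.head_adj m hm i) (hx i).2.symm (hx j).1 (fun e => hxm e.symm)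
        (h.head_not_adj m hm j) (fun e => hij ((hthin j i).1 e.symm).symm)
    have hall : ∀ l, l = i ∨ l = j := by
      intro l
      by_contra! hne
      have := hG _ _ _ _ (s l) hP (h.head_ne_feet hm l).symm (h.feet_ne_body l i) (hx l).1.ne'
        (h.injective_feet.ne hne.2)
      have h1 : G.Adj (s l) x := (hx l).1.symm
      have h2 : ¬G.Adj (s l) (k i) := fun e => hne.1 ((hthin l i).1 e)
      have h3 := h.indep l j
      tauto
    have hl' : ∀ a b, G.Adj (s a) ((k ∘ Equiv.swap i j) b) ↔ a ≠ b := by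
      intro a b
      rw [Function.comp_apply, hthin]
      rcases hall a with rfl | rfl <;> rcases hall b with rfl | rfl <;>
        simp [hij, hij.symm]
    have := this (k := k ∘ Equiv.swap i j)
      ⟨h.indep, fun a b hab => h.clique _ _ ((Equiv.swap i j).injective.ne hab),
        fun r hr a => h.head_adj r hr _, h.head_not_adj, Or.inr hl'⟩
      (fun a => ⟨(hx a).1, (hx _).2⟩) hl'
    rwa [(Equiv.swap i j).surjective.range_comp] at this
  obtain ⟨i₀⟩ : Nonempty ι := inferInstance
  have hP : IsP4 G (s i₀) x (k i₀) m :=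
    .of_adj (hx i₀).1.symm (hx i₀).2 (h.head_adj m hm i₀).symm (fun e => (hl i₀ i₀).1 e rfl)
      (fun e => h.head_not_adj m hm i₀ e.symm) hxm
  have hR : ∀ r ∈ R, r ≠ m → G.Adj r x ∧ ¬G.Adj r m := by
    intro r hr hrm
    have h1 := h.head_not_adj r hr i₀
    have h2 := h.head_adj r hr i₀
    have hrx : r ≠ x := by
      rintro rfl
      exact h1 (hx i₀).1
    have := hG _ _ _ _ r hP (h.head_ne_feet hr i₀) hrx (h.head_ne_body hr i₀) hrm
    tauto
  refine ⟨Option ι, inferInstance, fun o => o.elim m s, fun o => o.elim x k, R \ {m},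
    ⟨?_, ?_, ?_, ?_, Or.inr ?_⟩, ?_⟩
  · rintro (_ | i) (_ | j)
    · exact G.irrefl
    · exact h.head_not_adj m hm j
    · exact fun e => h.head_not_adj m hm i e.symm
    · exact h.indep i j
  · rintro (_ | i) (_ | j) hij
    · exact absurd rfl hij
    · exact (hx j).2
    · exact (hx i).2.symm
    · exact h.clique i j fun e => hij (e ▸ rfl)
  · rintro r ⟨hr, hrm⟩ (_ | i)
    · exact (hR r hr hrm).1
    · exact h.head_adj r hr i
  · rintro r ⟨hr, hrm⟩ (_ | i)
    · exact (hR r hr hrm).2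
    · exact h.head_not_adj r hr i
  · rintro (_ | i) (_ | j)
    · simpa using fun e => hxm e.symm
    · simpa using h.head_adj m hm j
    · simpa using (hx i).1.symm
    · simpa using hl i j
  · ext v
    simp only [Set.mem_insert_iff, Set.mem_union, Set.mem_range, Option.exists, Option.elim,
      Set.mem_sdiff, Set.mem_singleton_iff]
    by_cases hv : v = m
    · subst hv; tauto
    · have := Ne.symm hv
      tauto

/-- A vertex that distinguishes two vertices of an induced spider extends it to a larger one. -/
lemma InducesSpider.uniform_or_insert (hG : RespectsP4 G) (h : InducesSpider G H) {x : V}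
    (hxH : x ∉ H) :
    (∀ v ∈ H, G.Adj x v) ∨ (∀ v ∈ H, ¬G.Adj x v) ∨ InducesSpider G (insert x H) := by
  obtain ⟨ι, _, s, k, R, hf, rfl⟩ := h
  have hs : ∀ i, x ≠ s i := by
    rintro i rfl; simp at hxH
  have hk : ∀ i, x ≠ k i := by
    rintro i rfl; simp at hxH
  have hxR : x ∉ R := fun hx => hxH (Or.inr hx)
  rcases hf.adj_legs hG hs hk with hx | hx | hx
  · by_cases hm : ∃ m ∈ R, ¬G.Adj x m
    · obtain ⟨m, hm, hxm⟩ := hm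
      exact .inr (.inr (hf.inducesSpider_insert hG hx hm hxm))
    · push Not at hm
      left
      rintro v ((⟨i, rfl⟩ | ⟨i, rfl⟩) | hv)
      exacts [(hx i).1, (hx i).2, hm v hv]
  · right
    by_cases hm : ∃ m ∈ R, G.Adj x m
    · obtain ⟨m, hm, hxm⟩ := hm
      right
      have := hf.compl.inducesSpider_insert hG.compl (x := x) (m := m)
        (fun i => ⟨(compl_adj ..).2 ⟨hk i, (hx i).2⟩, (compl_adj ..).2 ⟨hs i, (hx i).1⟩⟩) hm
        (fun e => ((compl_adj ..).1 e).2 hxm)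
      rwa [inducesSpider_compl, Set.union_comm (Set.range k)] at this
    · push Not at hm
      left
      rintro v ((⟨i, rfl⟩ | ⟨i, rfl⟩) | hv)
      exacts [(hx i).1, (hx i).2, hm v hv]
  · right; right
    refine ⟨ι, ‹_›, s, k, insert x R, ⟨hf.indep, hf.clique, ?_, ?_, hf.legs⟩, ?_⟩
    · rintro r (rfl | hr) i
      exacts [(hx i).2, hf.head_adj r hr i]
    · rintro r (rfl | hr) i
      exacts [(hx i).1, hf.head_not_adj r hr i]
    · rw [Set.union_insert]

lemma IsP4.inducesSpider {a b c d : V} (h : IsP4 G a b c d) {R : Set V}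
    (hR : ∀ r ∈ R, ¬G.Adj r a ∧ G.Adj r b ∧ G.Adj r c ∧ ¬G.Adj r d) :
    InducesSpider G ({a, d} ∪ {b, c} ∪ R) := by
  obtain ⟨-, -, -, -, -, -, h1, h2, h3, h4, h5, h6⟩ := h
  refine ⟨ULift Bool, inferInstance, fun i => bif i.down then a else d,
    fun i => bif i.down then b else c, R, ⟨?_, ?_, ?_, ?_, Or.inl ?_⟩, ?_⟩
  · rintro ⟨_ | _⟩ ⟨_ | _⟩ <;> simp [h5, G.adj_comm d a]
  · rintro ⟨_ | _⟩ ⟨_ | _⟩ <;> simp [h2, h2.symm]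
  · rintro r hr ⟨_ | _⟩ <;> simp [hR r hr]
  · rintro r hr ⟨_ | _⟩ <;> simp [hR r hr]
  · rintro ⟨_ | _⟩ ⟨_ | _⟩ <;> simp [h1, h3.symm, h4, G.adj_comm d b, h6]
  · congr 2 <;> ext v <;> simp [eq_comm, or_comm]

end InducesSpider

lemma SimpleGraph.Connected.exists_adj_mem_notMem {G : SimpleGraph V} (h : G.Connected)
    {A : Set V} {u v : V} (hu : u ∈ A) (hv : v ∉ A) : ∃ y ∈ A, ∃ z ∉ A, G.Adj y z := by
  obtain ⟨p⟩ := h.preconnected u v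
  obtain ⟨d, -, h1, h2⟩ := p.exists_boundary_dart A hu hv
  exact ⟨d.fst, h1, d.snd, h2, d.adj⟩

/-- In a connected and co-connected graph, a proper homogeneous set `H` such that no induced path
on four vertices meets it in exactly one vertex lies in the head of such a path. -/
lemma exists_isP4_of_homogeneous [Finite V] {G : SimpleGraph V} (hc : G.Connected)
    (hcc : Gᶜ.Connected) {H : Set V} {h₀ : V} (hh₀ : h₀ ∈ H)
    (hmod : ∀ x ∉ H, (∀ h ∈ H, G.Adj x h) ∨ (∀ h ∈ H, ¬G.Adj x h))
    (hend : ∀ a ∉ H, ∀ b ∉ H, ∀ c ∉ H, ¬IsP4 G h₀ a b c)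
    (hmid : ∀ a ∉ H, ∀ b ∉ H, ∀ c ∉ H, ¬IsP4 G a h₀ b c)
    {x : V} (hx : x ∉ H) :
    ∃ a ∉ H, ∃ b c d, IsP4 G a b c d ∧
      ∀ r ∈ H, ¬G.Adj r a ∧ G.Adj r b ∧ G.Adj r c ∧ ¬G.Adj r d := by
  let T : Set V := {y | y ∉ H ∧ ∀ h ∈ H, G.Adj y h}
  let N : Set V := {y | y ∉ H ∧ ∀ h ∈ H, ¬G.Adj y h}
  have hTN : ∀ y ∉ H, y ∈ T ∨ y ∈ N := fun y hy =>
    (hmod y hy).imp (fun e => ⟨hy, e⟩) (fun e => ⟨hy, e⟩)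
  have hN : ∀ n ∈ N, ∀ n' ∈ N, ∀ t ∈ T, G.Adj n n' → G.Adj n t → G.Adj n' t := by
    intro n hn n' hn' t ht h1 h2
    by_contra h3
    exact hend t ht.1 n hn.1 n' hn'.1 (.of_adj (ht.2 _ hh₀).symm h2.symm h1
      (fun e => hn.2 _ hh₀ e.symm) (fun e => hn'.2 _ hh₀ e.symm) (fun e => h3 e.symm))
  have hT : ∀ t ∈ T, ∀ t' ∈ T, ∀ n ∈ N, ¬G.Adj t t' → ¬G.Adj t n → ¬G.Adj t' n := by
    intro t ht t' ht' n hn h1 h2 h3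
    exact hmid t ht.1 t' ht'.1 n hn.1 (.of_adj (ht.2 _ hh₀) (ht'.2 _ hh₀).symm h3 h1 h2
      (fun e => hn.2 _ hh₀ e.symm))
  have hNT : ∀ n ∈ N, ∃ t ∈ T, G.Adj t n := by
    intro n hn
    by_contra! hcon
    obtain ⟨y, ⟨hyN, hy⟩, z, hz, hyz⟩ := hc.exists_adj_mem_notMem
      (A := {y | y ∈ N ∧ ∀ t ∈ T, ¬G.Adj t y}) ⟨hn, hcon⟩ (v := h₀) (fun e => e.1.1 hh₀)
    have hzH : z ∉ H := fun e => hyN.2 z e hyz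
    rcases hTN z hzH with hzT | hzN
    · exact hy z hzT hyz.symm
    · refine hz ⟨hzN, fun t ht htz => hy t ht ?_⟩
      exact (hN z hzN y hyN t ht hyz.symm htz.symm).symm
  have hTN' : ∀ t ∈ T, ∃ n ∈ N, ¬G.Adj t n := by
    intro t ht
    by_contra! hcon
    obtain ⟨y, ⟨hyT, hy⟩, z, hz, hyz⟩ := hcc.exists_adj_mem_notMem
      (A := {y | y ∈ T ∧ ∀ n ∈ N, G.Adj y n}) ⟨ht, hcon⟩ (v := h₀) (fun e => e.1.1 hh₀)
    have hyz' := ((compl_adj ..).1 hyz).2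
    have hzH : z ∉ H := fun e => hyz' (hyT.2 z e)
    rcases hTN z hzH with hzT | hzN
    · refine hz ⟨hzT, fun n hn => ?_⟩
      by_contra hzn
      exact hT z hzT y hyT n hn (fun e => hyz' e.symm) hzn (hy n hn)
    · exact hyz' (hy z hzN)
  have hTne : T.Nonempty := by
    rcases hTN x hx with hxT | hxN
    · exact ⟨x, hxT⟩
    · obtain ⟨t, ht, -⟩ := hNT x hxN
      exact ⟨t, ht⟩
  obtain ⟨t, htT, hmax⟩ :=
    T.toFinite.exists_maximalFor (fun t => {n | n ∈ N ∧ G.Adj t n}) T hTne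
  obtain ⟨n', hn'N, htn'⟩ := hTN' t htT
  obtain ⟨t', ht'T, ht'n'⟩ := hNT n' hn'N
  obtain ⟨n, hnN, htn, ht'n⟩ : ∃ n ∈ N, G.Adj t n ∧ ¬G.Adj t' n := by
    by_contra! hcon
    have := hmax ht'T (fun n hn => ⟨hn.1, hcon n hn.1 hn.2⟩)
    exact htn' (this (show n' ∈ {n | n ∈ N ∧ G.Adj t' n} from ⟨hn'N, ht'n'⟩)).2
  refine ⟨n, hnN.1, t, t', n', .of_adj htn.symm ?_ ht'n' (fun e => ht'n e.symm) ?_ htn', ?_⟩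
  · by_contra h
    exact hT t htT t' ht'T n' hn'N h htn' ht'n'
  · exact fun e => htn' (hN n hnN n' hn'N t htT e htn.symm).symm
  · exact fun r hr => ⟨fun e => hnN.2 r hr e.symm, (htT.2 r hr).symm, (ht'T.2 r hr).symm,
      fun e => hn'N.2 r hr e.symm⟩

lemma exists_isP4 [Finite V] [Nontrivial V] {G : SimpleGraph V} (hc : G.Connected)
    (hcc : Gᶜ.Connected) : ∃ a b c d, IsP4 G a b c d := by
  by_contra! hcon
  obtain ⟨h, x, hne⟩ := exists_pair_ne V
  obtain ⟨a, -, b, c, d, hP, -⟩ := exists_isP4_of_homogeneous hc hcc (Set.mem_singleton h)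
    (fun y _ => by simpa using em (G.Adj y h)) (fun _ _ _ _ _ _ => hcon _ _ _ _)
    (fun _ _ _ _ _ _ => hcon _ _ _ _) (x := x) (fun e => hne e.symm)
  exact hcon a b c d hP

lemma RespectsP4.inducesSpider_univ {V : Type u} [Finite V] [Nontrivial V] {G : SimpleGraph V}
    (hG : RespectsP4 G) (hc : G.Connected) (hcc : Gᶜ.Connected) :
    InducesSpider G Set.univ := by
  have hne : {H | InducesSpider G H}.Nonempty := by
    obtain ⟨a, b, c, d, hP⟩ := exists_isP4 hc hcc
    exact ⟨_, hP.inducesSpider (R := ∅) (by simp)⟩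
  obtain ⟨H, hH, hmax⟩ := (Set.toFinite {H | InducesSpider G H}).exists_maximal hne
  by_contra hU
  obtain ⟨x, hx⟩ : ∃ x, x ∉ H := by
    by_contra! hcon
    exact hU (Set.eq_univ_of_forall hcon ▸ hH)
  have hmod : ∀ x ∉ H, (∀ h ∈ H, G.Adj x h) ∨ (∀ h ∈ H, ¬G.Adj x h) := by
    intro y hy
    rcases hH.uniform_or_insert hG hy with h | h | h
    · exact .inl h
    · exact .inr h
    · exact absurd (hmax h (Set.subset_insert y H) (Set.mem_insert y H)) hy
  obtain ⟨h, hh, h', hh', hne'⟩ := hH.nontrivial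
  have hiff : ∀ a ∉ H, G.Adj h' a ↔ G.Adj h a := by
    intro a ha
    rw [G.adj_comm h', G.adj_comm h]
    rcases hmod a ha with e | e <;> simp [e h hh, e h' hh']
  obtain ⟨a, haH, b, c, d, hP, hR⟩ := exists_isP4_of_homogeneous hc hcc hh hmod
    (fun a ha b hb c hc hP => by
      have := hG _ _ _ _ h' hP hne'.symm (ne_of_mem_of_not_mem hh' ha)
        (ne_of_mem_of_not_mem hh' hb) (ne_of_mem_of_not_mem hh' hc)
      rw [hiff a ha, hiff b hb, hiff c hc] at this
      obtain ⟨-, -, -, -, -, -, h1, h2, h3, h4, h5, h6⟩ := hP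
      tauto)
    (fun a ha b hb c hc hP => by
      have := hG _ _ _ _ h' hP (ne_of_mem_of_not_mem hh' ha) hne'.symm
        (ne_of_mem_of_not_mem hh' hb) (ne_of_mem_of_not_mem hh' hc)
      rw [hiff a ha, hiff b hb, hiff c hc] at this
      obtain ⟨-, -, -, -, -, -, h1, h2, h3, h4, h5, h6⟩ := hP
      have := h1.symm
      tauto) hx
  exact haH (hmax (hP.inducesSpider hR) Set.subset_union_right (by simp))

/-- Let `G` be a `P4`-sparse graph with at least 2 vertices. Then exactly one
of the following holds: `G` is not connected; the complement of `G` is not connected;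
`G` is a spider. -/
theorem p4Sparse_trichotomy [Fintype V] (G : SimpleGraph V)
    (hcard : 2 ≤ Fintype.card V) (hG : P4Sparse G) :
    (¬G.Connected ∧ Gᶜ.Connected ∧ ¬IsSpider G) ∨
    (G.Connected ∧ ¬Gᶜ.Connected ∧ ¬IsSpider G) ∨
    (G.Connected ∧ Gᶜ.Connected ∧ IsSpider G) := by
  have : Nontrivial V := Fintype.one_lt_card_iff_nontrivial.1 hcard
  have hspider : IsSpider G → G.Connected ∧ Gᶜ.Connected := fun h =>
    ⟨(inducesSpider_univ_of_isSpider h).connected,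
      (inducesSpider_univ_of_isSpider h).compl.connected⟩
  have hor : G.Connected ∨ Gᶜ.Connected := connected_or_connected_compl G
  by_cases hc : G.Connected <;> by_cases hcc : Gᶜ.Connected
  · exact .inr (.inr ⟨hc, hcc, (hG.respectsP4.inducesSpider_univ hc hcc).isSpider⟩)
  all_goals tauto
end

section
/- Let G be a P4-sparse graph whose complement is not connected, and let C_1, ..., C_p be the vertex sets of the connected components of the complement of G. Then alpha(G) = sum over i of alpha(G[C_i]). -/
open SimpleGraph

variable {V : Type*}

theorem exists_isDeletionSet_ncard_eq (G : SimpleGraph V) :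
    ∃ F : Set (Sym2 V), IsDeletionSet G F ∧ F.ncard = cographAlpha G := by
  have hne : {n | ∃ F : Set (Sym2 V), IsDeletionSet G F ∧ F.ncard = n}.Nonempty := by
    refine ⟨_, G.edgeSet, ⟨subset_rfl, ?_⟩, rfl⟩
    rintro a b c d ⟨-, -, -, -, -, -, hab, -⟩
    simp at hab
  exact Nat.sInf_mem hne

theorem IsDeletionSet.cographAlpha_le {G : SimpleGraph V} {F : Set (Sym2 V)}
    (hF : IsDeletionSet G F) : cographAlpha G ≤ F.ncard :=
  Nat.sInf_le ⟨F, hF, rfl⟩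

theorem IsDeletionSet.induce {G : SimpleGraph V} {F : Set (Sym2 V)} (hF : IsDeletionSet G F)
    (s : Set V) : IsDeletionSet (G.induce s) (Sym2.map Subtype.val ⁻¹' F) := by
  refine ⟨?_, ?_⟩
  · intro e he
    induction e with
    | _ x y => simpa using hF.1 he
  · intro a b c d habcd
    refine hF.2 a b c d ?_
    simpa [IsP4, deleteEdges_adj, Subtype.ext_iff] using habcd

/-- Vertices that are distinct and non-adjacent lie in the same component of the complement. -/
theorem compl_connectedComponentMk_eq {G : SimpleGraph V} {x y : V} (hne : x ≠ y)
    (hxy : ¬G.Adj x y) : Gᶜ.connectedComponentMk x = Gᶜ.connectedComponentMk y :=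
  ConnectedComponent.sound (Adj.reachable ((compl_adj G x y).2 ⟨hne, hxy⟩))

/-- Unordered pairs that agree as pairs of vertices come from the same component. -/
theorem eq_of_sym2_map_val_eq {G : SimpleGraph V} {c c' : G.ConnectedComponent}
    {e : Sym2 c.supp} {e' : Sym2 c'.supp}
    (h : e.map Subtype.val = e'.map Subtype.val) : c = c' := by
  induction e with
  | _ x y =>
    have hx : (x : V) ∈ e'.map Subtype.val := by simp [← h]
    obtain ⟨z, -, hz⟩ := Sym2.mem_map.1 hx
    have h₁ : G.connectedComponentMk x = c := x.2
    have h₂ : G.connectedComponentMk z = c' := z.2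
    rw [← h₁, ← h₂, hz]

theorem map_val_mem_iUnion_iff {G : SimpleGraph V}
    (F : ∀ c : G.ConnectedComponent, Set (Sym2 c.supp)) {c : G.ConnectedComponent}
    (e : Sym2 c.supp) :
    e.map Subtype.val ∈ ⋃ c, Sym2.map Subtype.val '' F c ↔ e ∈ F c := by
  refine ⟨fun he => ?_, fun he => Set.mem_iUnion.2 ⟨c, e, he, rfl⟩⟩
  obtain ⟨c', e', he', heq⟩ := Set.mem_iUnion.1 he
  obtain rfl := eq_of_sym2_map_val_eq heq
  exact Sym2.map.injective Subtype.val_injective heq ▸ he'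

/-- Deletion sets of the co-components of a graph together form a deletion set. -/
theorem isDeletionSet_iUnion {G : SimpleGraph V}
    {F : ∀ c : Gᶜ.ConnectedComponent, Set (Sym2 c.supp)}
    (hF : ∀ c, IsDeletionSet (G.induce c.supp) (F c)) :
    IsDeletionSet G (⋃ c, Sym2.map Subtype.val '' F c) := by
  have hadj (c : Gᶜ.ConnectedComponent) (x y : c.supp) :
      (G.deleteEdges (⋃ c, Sym2.map Subtype.val '' F c)).Adj x y ↔
        ((G.induce c.supp).deleteEdges (F c)).Adj x y := by
    rw [deleteEdges_adj, deleteEdges_adj, comap_adj, ← map_val_mem_iUnion_iff F]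
    rfl
  have hcomp {x y : V} (hne : x ≠ y)
      (hxy : ¬(G.deleteEdges (⋃ c, Sym2.map Subtype.val '' F c)).Adj x y) :
      Gᶜ.connectedComponentMk x = Gᶜ.connectedComponentMk y := by
    by_cases hG : G.Adj x y
    · have hmem : s(x, y) ∈ ⋃ c, Sym2.map Subtype.val '' F c := by
        by_contra hmem
        exact hxy (deleteEdges_adj.2 ⟨hG, hmem⟩)
      obtain ⟨c, e, -, he⟩ := Set.mem_iUnion.1 hmem
      have hc (z : V) (hz : z ∈ s(x, y)) : Gᶜ.connectedComponentMk z = c := by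
        rw [← he] at hz
        obtain ⟨w, -, rfl⟩ := Sym2.mem_map.1 hz
        exact w.2
      rw [hc x (by simp), hc y (by simp)]
    · exact compl_connectedComponentMk_eq hne hG
  refine ⟨?_, ?_⟩
  · refine Set.iUnion_subset fun c => ?_
    rintro _ ⟨e, he, rfl⟩
    induction e with
    | _ x y => simpa using (hF c).1 he
  · rintro a b c d ⟨hab, hac, had, hbc, hbd, hcd, h₁, h₂, h₃, h₄, h₅, h₆⟩
    have hac' := hcomp hac h₄
    have had' := hcomp had h₅
    have hbd' := hcomp hbd h₆
    let k := Gᶜ.connectedComponentMk a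
    refine (hF k).2 ⟨a, rfl⟩ ⟨b, hbd'.trans had'.symm⟩ ⟨c, hac'.symm⟩ ⟨d, had'.symm⟩ ?_
    simp only [IsP4, ← hadj]
    simp only [ne_eq, Subtype.ext_iff]
    exact ⟨hab, hac, had, hbc, hbd, hcd, h₁, h₂, h₃, h₄, h₅, h₆⟩

/-- If `G` is `P4`-sparse and its complement is not connected, and
`C₁, …, C_p` are the vertex sets of the connected components of the complement of `G`,
then `α(G) = ∑ᵢ α(G[Cᵢ])`. -/
theorem cographAlpha_of_compl_not_connected [Fintype V] (G : SimpleGraph V)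
    (hG : P4Sparse G) (h : ¬Gᶜ.Connected) :
    cographAlpha G = ∑ᶠ c : Gᶜ.ConnectedComponent, cographAlpha (G.induce c.supp) := by
  classical
  rw [finsum_eq_sum_of_fintype]
  apply le_antisymm
  · choose F hF hcard using fun c : Gᶜ.ConnectedComponent =>
      exists_isDeletionSet_ncard_eq (G.induce c.supp)
    calc cographAlpha G ≤ (⋃ c, Sym2.map Subtype.val '' F c).ncard :=
          (isDeletionSet_iUnion hF).cographAlpha_le
      _ ≤ ∑ c, (Sym2.map Subtype.val '' F c).ncard := Set.ncard_iUnion_le_of_fintype _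
      _ ≤ _ := Finset.sum_le_sum fun c _ => hcard c ▸ Set.ncard_image_le (Set.toFinite _)
  · obtain ⟨F, hF, hcard⟩ := exists_isDeletionSet_ncard_eq G
    have hinj : Function.Injective fun p : Σ c : Gᶜ.ConnectedComponent,
        ↥(Sym2.map (Subtype.val : c.supp → V) ⁻¹' F) => (⟨p.2.1.map Subtype.val, p.2.2⟩ : F) := by
      rintro ⟨c, e, he⟩ ⟨c', e', he'⟩ heq
      have heq' : e.map Subtype.val = e'.map Subtype.val := congrArg Subtype.val heq
      obtain rfl := eq_of_sym2_map_val_eq heq'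
      obtain rfl := Sym2.map.injective Subtype.val_injective heq'
      rfl
    calc ∑ c : Gᶜ.ConnectedComponent, cographAlpha (G.induce c.supp)
        ≤ ∑ c : Gᶜ.ConnectedComponent,
            (Sym2.map (Subtype.val : c.supp → V) ⁻¹' F).ncard :=
          Finset.sum_le_sum fun c _ => (hF.induce c.supp).cographAlpha_le
      _ = Nat.card (Σ c : Gᶜ.ConnectedComponent,
            ↥(Sym2.map (Subtype.val : c.supp → V) ⁻¹' F)) := Nat.card_sigma.symm
      _ ≤ Nat.card F := Nat.card_le_card_of_injective _ hinj
      _ = cographAlpha G := hcard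
end

section
/- Let G be a bipartite graph with parts X and Y such that |X| = 2, |Y| >= 2, there is a vertex y in Y that is adjacent to exactly one vertex of X, and every vertex of Y other than y is adjacent to both vertices of X. Then alpha(G) = 1; that is, G is not a cograph, and there is a single edge whose removal from G yields a cograph. -/
open SimpleGraph

variable {V : Type*}

/-- If adjacency in `H` is exactly "one endpoint in `A`, the other in `B`", then `H` is a
cograph. -/
theorem isCograph_of_adj_iff (H : SimpleGraph V) (A B : Set V) (hdisj : Disjoint A B)
    (hH : ∀ u v, H.Adj u v ↔ (u ∈ A ∧ v ∈ B) ∨ (u ∈ B ∧ v ∈ A)) : IsCograph H := by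
  have hAB : ∀ v, v ∈ A → v ∉ B := fun _ h => Set.disjoint_left.mp hdisj h
  rintro a b c d ⟨-, -, -, -, -, -, hab, hbc, hcd, -, had, -⟩
  rw [hH] at hab hbc hcd had
  have hb := hAB b
  have hc := hAB c
  tauto

/-- Let `G` be a bipartite graph with parts `X` and `Y` such that `|X| = 2`,
`|Y| ≥ 2`, some vertex `y ∈ Y` is adjacent to exactly one vertex of `X`, and every other
vertex of `Y` is adjacent to both vertices of `X`. Then `α(G) = 1`: `G` is not a cograph and
there is a single edge of `G` whose removal yields a cograph. -/
theorem cographAlpha_special_bipartite (G : SimpleGraph V) (X Y : Set V)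
    (hpart : X ∪ Y = Set.univ) (hdisj : Disjoint X Y)
    (hbip : ∀ u v : V, G.Adj u v → (u ∈ X ∧ v ∈ Y) ∨ (u ∈ Y ∧ v ∈ X))
    (hX : X.ncard = 2) (hY : 2 ≤ Y.ncard)
    (hy : ∃ y ∈ Y, (∃! x, x ∈ X ∧ G.Adj y x) ∧
      ∀ y' ∈ Y, y' ≠ y → ∀ x ∈ X, G.Adj y' x) :
    ¬IsCograph G ∧ (∃ e ∈ G.edgeSet, IsCograph (G.deleteEdges {e})) ∧
      cographAlpha G = 1 := by
  obtain ⟨y, hyY, ⟨x, ⟨hxX, hyx⟩, hx⟩, hfull⟩ := hy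
  have hXY : ∀ v, v ∈ X → v ∉ Y := fun _ h => Set.disjoint_left.mp hdisj h
  obtain ⟨x', hx'X, hx'x⟩ := Set.exists_ne_of_one_lt_ncard (by omega : 1 < X.ncard) x
  obtain ⟨z, hzY, hzy⟩ := Set.exists_ne_of_one_lt_ncard (by omega : 1 < Y.ncard) y
  have hyx' : ¬G.Adj y x' := fun h => hx'x (hx x' ⟨hx'X, h⟩)
  have hnot : ¬IsCograph G := by
    refine fun h => h y x z x' ⟨hyx.ne, hzy.symm, ?_, ?_, hx'x.symm, ?_, hyx,
      (hfull z hzY hzy x hxX).symm, hfull z hzY hzy x' hx'X, ?_, hyx', ?_⟩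
    · rintro rfl; exact hXY _ hx'X hyY
    · rintro rfl; exact hXY _ hxX hzY
    · rintro rfl; exact hXY _ hx'X hzY
    · intro hadj; have := hbip _ _ hadj; have := hXY y; have := hXY z; tauto
    · intro hadj; have := hbip _ _ hadj; have := hXY x; have := hXY x'; tauto
  have hdel : IsCograph (G.deleteEdges {s(y, x)}) := by
    refine isCograph_of_adj_iff _ X (Y \ {y}) (hdisj.mono_right Set.sdiff_subset) fun u v => ?_
    have hyX : y ∉ X := fun h => hXY y h hyY
    have hux : G.Adj y u → u ∈ X → u = x := fun h hu => hx u ⟨hu, h⟩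
    have hvx : G.Adj y v → v ∈ X → v = x := fun h hv => hx v ⟨hv, h⟩
    simp only [deleteEdges_adj, Set.mem_singleton_iff, Sym2.eq_iff, Set.mem_sdiff]
    constructor
    · rintro ⟨hadj, hne⟩
      rcases hbip u v hadj with ⟨hu, hv⟩ | ⟨hu, hv⟩
      · refine Or.inl ⟨hu, hv, ?_⟩
        rintro rfl
        exact hne (Or.inr ⟨hux hadj.symm hu, rfl⟩)
      · refine Or.inr ⟨⟨hu, ?_⟩, hv⟩
        rintro rfl
        exact hne (Or.inl ⟨rfl, hvx hadj hv⟩)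
    · rintro (⟨hu, hv, hvy⟩ | ⟨⟨hu, huy⟩, hv⟩)
      · refine ⟨(hfull v hv hvy u hu).symm, ?_⟩
        rintro (⟨rfl, -⟩ | ⟨-, h⟩)
        exacts [hyX hu, hvy h]
      · refine ⟨hfull u hu huy v hv, ?_⟩
        rintro (⟨h, -⟩ | ⟨-, rfl⟩)
        exacts [huy h, hyX hv]
  refine ⟨hnot, ⟨s(y, x), hyx, hdel⟩, le_antisymm ?_ ?_⟩
  · exact Nat.sInf_le ⟨{s(y, x)}, ⟨by simpa using hyx, hdel⟩, Set.ncard_singleton _⟩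
  · have hfin : Finite V := by
      rw [← Set.finite_univ_iff, ← hpart]
      exact (Set.finite_of_ncard_pos (by omega)).union (Set.finite_of_ncard_pos (by omega))
    refine le_csInf ⟨1, {s(y, x)}, ⟨by simpa using hyx, hdel⟩, Set.ncard_singleton _⟩ ?_
    rintro n ⟨F, ⟨-, hF⟩, rfl⟩
    rw [Nat.one_le_iff_ne_zero, Ne, Set.ncard_eq_zero (Set.toFinite F)]
    rintro rfl
    exact hnot (by simpa using hF)
end

section
/- Let G be a P4-sparse graph and let A = {a, b, c, d} be a set of four vertices inducing a P4 in G with edges ab, bc, cd (so b and c are the internal vertices). Then every vertex v not in A with 1 <= |N(v) ∩ A| <= 3 satisfies N(v) ∩ A = {b, c}. In other words, P(A) = Pmid(A), where Pmid(A) is the set of vertices outside A adjacent to exactly the two internal vertices of the path. -/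
open SimpleGraph

variable {V : Type*}

/-- In a `P4`-sparse graph, no induced `P4` within the union of a `P4` and a further vertex `v`
passes through `v`. -/
lemma P4Sparse.not_isP4_of_mem {G : SimpleGraph V} (hG : P4Sparse G) {a b c d v w x y z : V}
    (hP4 : IsP4 G a b c d) (hv : v ∉ ({a, b, c, d} : Set V))
    (hsub : ({w, x, y, z} : Set V) ⊆ {v, a, b, c, d}) (hmem : v ∈ ({w, x, y, z} : Set V)) :
    ¬IsP4 G w x y z := by
  intro h
  have hcard : ({v, a, b, c, d} : Set V).ncard = 5 := by
    obtain ⟨hab, hac, had, hbc, hbd, hcd, -⟩ := hP4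
    rw [Set.ncard_insert_of_notMem hv, Set.ncard_insert_of_notMem (by simp [*]),
      Set.ncard_insert_of_notMem (by simp [*]), Set.ncard_pair hcd]
  have heq := hG _ hcard _ _ (Set.subset_insert v _) hsub ⟨a, b, c, d, hP4, rfl⟩
    ⟨w, x, y, z, h, rfl⟩
  exact hv (heq ▸ hmem)

/-- A vertex `v` outside an induced `P4` of a `P4`-sparse graph is adjacent to none of it, all of
it, or exactly its two internal vertices. -/
lemma P4Sparse.adj_cases {G : SimpleGraph V} (hG : P4Sparse G) {a b c d v : V}
    (hP4 : IsP4 G a b c d) (hv : v ∉ ({a, b, c, d} : Set V)) :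
    (¬G.Adj v a ∧ ¬G.Adj v b ∧ ¬G.Adj v c ∧ ¬G.Adj v d) ∨
      (G.Adj v a ∧ G.Adj v b ∧ G.Adj v c ∧ G.Adj v d) ∨
      (¬G.Adj v a ∧ G.Adj v b ∧ G.Adj v c ∧ ¬G.Adj v d) := by
  have no_P4 : ∀ w x y z : V, ({w, x, y, z} : Set V) ⊆ {v, a, b, c, d} →
      v ∈ ({w, x, y, z} : Set V) → ¬IsP4 G w x y z :=
    fun _ _ _ _ hsub hmem => hG.not_isP4_of_mem hP4 hv hsub hmem
  have hvabc := no_P4 v a b c (by grind) (by simp)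
  have hbcdv := no_P4 b c d v (by grind) (by simp)
  have hvbcd := no_P4 v b c d (by grind) (by simp)
  have habcv := no_P4 a b c v (by grind) (by simp)
  have havcd := no_P4 a v c d (by grind) (by simp)
  have habvd := no_P4 a b v d (by grind) (by simp)
  have havdc := no_P4 a v d c (by grind) (by simp)
  have hbavd := no_P4 b a v d (by grind) (by simp)
  clear no_P4
  simp only [Set.mem_insert_iff, Set.mem_singleton_iff, not_or] at hv
  have hsymm := fun u w => G.adj_comm u w
  unfold IsP4 at *
  grind

/-- Let `G` be `P4`-sparse and let `A = {a, b, c, d}` induce a `P4` with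
edges `ab, bc, cd` (so `b, c` are the internal vertices). Then every vertex `v ∉ A` with
`1 ≤ |N(v) ∩ A| ≤ 3` satisfies `N(v) ∩ A = {b, c}`. -/
theorem p4Sparse_partial_neighbors (G : SimpleGraph V) (hG : P4Sparse G)
    (a b c d : V) (hP4 : IsP4 G a b c d) (A : Set V) (hA : A = {a, b, c, d}) :
    ∀ v : V, v ∉ A → 1 ≤ (G.neighborSet v ∩ A).ncard → (G.neighborSet v ∩ A).ncard ≤ 3 →
      G.neighborSet v ∩ A = {b, c} := by
  subst hA
  intro v hv hpos hle
  rcases hG.adj_cases hP4 hv with ⟨ha, hb, hc, hd⟩ | ⟨ha, hb, hc, hd⟩ | ⟨ha, hb, hc, hd⟩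
  · have hempty : G.neighborSet v ∩ {a, b, c, d} = ∅ := by
      ext w
      simp only [Set.mem_inter_iff, mem_neighborSet, Set.mem_insert_iff, Set.mem_singleton_iff]
      grind
    simp [hempty] at hpos
  · have hall : G.neighborSet v ∩ {a, b, c, d} = {a, b, c, d} := by
      simp [Set.insert_subset_iff, ha, hb, hc, hd]
    obtain ⟨hab, hac, had, hbc, hbd, hcd, -⟩ := hP4
    rw [hall, Set.ncard_insert_of_notMem (by simp [*]), Set.ncard_insert_of_notMem (by simp [*]),
      Set.ncard_pair hcd] at hle
    omega
  · ext w
    simp only [Set.mem_inter_iff, mem_neighborSet, Set.mem_insert_iff, Set.mem_singleton_iff]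
    grind
end

section
/- Let G be a P4-sparse graph and let A be a set of four vertices inducing a P4 in G. Then there do not exist distinct vertices u, v in I(A) ∪ P(A) and a vertex x in T(A) such that the edges of G among {u, v, x} are exactly uv and ux. -/
open SimpleGraph

variable {V : Type*}

/-- `T(A)`: the vertices outside `A` adjacent to all vertices of `A`. -/
def tSet (G : SimpleGraph V) (A : Set V) : Set V :=
  {v | v ∉ A ∧ ∀ a ∈ A, G.Adj v a}

/-- `I(A)`: the vertices outside `A` adjacent to no vertex of `A`. -/
def iSet (G : SimpleGraph V) (A : Set V) : Set V :=
  {v | v ∉ A ∧ ∀ a ∈ A, ¬G.Adj v a}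

/-- `P(A)`: the vertices `v` outside `A` with `1 ≤ |N(v) ∩ A| ≤ 3`. -/
def pSet (G : SimpleGraph V) (A : Set V) : Set V :=
  {v | v ∉ A ∧ 1 ≤ (G.neighborSet v ∩ A).ncard ∧ (G.neighborSet v ∩ A).ncard ≤ 3}

/-- A `P4`-sparse graph has no second `P4` through a vertex `e` inside a `P4` extended by `e`. -/
lemma P4Sparse.not_isP4_of_mem_s8 {G : SimpleGraph V} (hG : P4Sparse G) {a b c d e p q r s : V}
    (h : IsP4 G a b c d) (he : e ∉ ({a, b, c, d} : Set V)) (h' : IsP4 G p q r s)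
    (hsub : ({p, q, r, s} : Set V) ⊆ {e, a, b, c, d}) :
    e ∉ ({p, q, r, s} : Set V) := by
  intro hmem
  have hcard : ({e, a, b, c, d} : Set V).ncard = 5 := by
    obtain ⟨hab, hac, had, hbc, hbd, hcd, -⟩ := h
    rw [Set.ncard_insert_of_notMem he, Set.ncard_insert_of_notMem (by simp [hab, hac, had]),
      Set.ncard_insert_of_notMem (by simp [hbc, hbd]), Set.ncard_pair hcd]
  have heq := hG _ hcard _ _ (Set.subset_insert _ _) hsub ⟨a, b, c, d, h, rfl⟩
    ⟨p, q, r, s, h', rfl⟩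
  exact he (heq ▸ hmem)

/-- The reversal of an induced `P4` is an induced `P4`. -/
lemma IsP4.reverse {G : SimpleGraph V} {a b c d : V} (h : IsP4 G a b c d) : IsP4 G d c b a := by
  simp only [IsP4, G.adj_comm] at h ⊢
  grind

/-- In a `P4`-sparse graph, a vertex adjacent to an endpoint of a `P4` is adjacent to all of it. -/
lemma P4Sparse.adj_all_of_adj_endpoint {G : SimpleGraph V} (hG : P4Sparse G) {a b c d v : V}
    (h : IsP4 G a b c d) (hv : v ∉ ({a, b, c, d} : Set V)) (hva : G.Adj v a) :
    G.Adj v b ∧ G.Adj v c ∧ G.Adj v d := by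
  have key : ∀ p q r s : V, ({p, q, r, s} : Set V) ⊆ {v, a, b, c, d} →
      v ∈ ({p, q, r, s} : Set V) → ¬IsP4 G p q r s :=
    fun p q r s hsub hmem h' => hG.not_isP4_of_mem_s8 h hv h' hsub hmem
  have vabc := key v a b c (by grind) (by simp)
  have vbcd := key v b c d (by grind) (by simp)
  have avcd := key a v c d (by grind) (by simp)
  have avdc := key a v d c (by grind) (by simp)
  have bavd := key b a v d (by grind) (by simp)
  simp only [Set.mem_insert_iff, Set.mem_singleton_iff, not_or] at hv
  have symm := fun x y : V => G.adj_comm x y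
  clear key
  unfold IsP4 at *
  by_cases hb : G.Adj v b <;> by_cases hc : G.Adj v c <;> by_cases hd : G.Adj v d <;>
    grind

/-- In a `P4`-sparse graph, a vertex of `I(A) ∪ P(A)` misses the first endpoint of `A`. -/
lemma P4Sparse.not_adj_endpoint {G : SimpleGraph V} (hG : P4Sparse G) {a b c d v : V}
    (h : IsP4 G a b c d) (hv : v ∈ iSet G {a, b, c, d} ∪ pSet G {a, b, c, d}) :
    ¬G.Adj v a := by
  intro hva
  rcases hv with ⟨-, hv⟩ | ⟨hmem, -, hle⟩
  · exact hv a (by simp) hva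
  · obtain ⟨hb, hc, hd⟩ := hG.adj_all_of_adj_endpoint h hmem hva
    have hsub : ({a, b, c, d} : Set V) ⊆ G.neighborSet v := by
      rintro y (rfl | rfl | rfl | rfl) <;> assumption
    obtain ⟨hab, hac, had, hbc, hbd, hcd, -⟩ := h
    rw [Set.inter_eq_right.mpr hsub, Set.ncard_insert_of_notMem (by simp [hab, hac, had]),
      Set.ncard_insert_of_notMem (by simp [hbc, hbd]), Set.ncard_pair hcd] at hle
    omega

/-- **Observation 2.3.** If `G` is `P4`-sparse and `A` induces a `P4`, then
there are no distinct `u, v ∈ I(A) ∪ P(A)` and `x ∈ T(A)` such that the edges of `G` among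
`{u, v, x}` are exactly `uv` and `ux`. -/
theorem p4Sparse_obs_2_3 (G : SimpleGraph V) (hG : P4Sparse G)
    (a b c d : V) (hP4 : IsP4 G a b c d) (A : Set V) (hA : A = {a, b, c, d}) :
    ¬∃ u v x : V, u ≠ v ∧ u ∈ iSet G A ∪ pSet G A ∧ v ∈ iSet G A ∪ pSet G A ∧
      x ∈ tSet G A ∧ G.Adj u v ∧ G.Adj u x ∧ ¬G.Adj v x := by
  subst hA
  rintro ⟨u, v, x, huv, hu, hv, ⟨hxA, hx⟩, auv, aux, nvx⟩
  have hrev : ({d, c, b, a} : Set V) = {a, b, c, d} := by grind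
  have hua := hG.not_adj_endpoint hP4 hu
  have hva := hG.not_adj_endpoint hP4 hv
  have hud := hG.not_adj_endpoint hP4.reverse (hrev.symm ▸ hu)
  have hvd := hG.not_adj_endpoint hP4.reverse (hrev.symm ▸ hv)
  have huA : u ∉ ({a, b, c, d} : Set V) := hu.elim And.left And.left
  have hvA : v ∉ ({a, b, c, d} : Set V) := hv.elim And.left And.left
  have path : ∀ y ∈ ({a, b, c, d} : Set V), ¬G.Adj u y → ¬G.Adj v y → IsP4 G v u x y := by
    intro y hy huy hvy
    have hxy := hx y hy
    refine ⟨huv.symm, ?_, ?_, aux.ne, ?_, hxy.ne, auv.symm, aux, hxy, nvx, hvy, huy⟩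
    · rintro rfl
      exact hva (hx a (by simp))
    · rintro rfl
      exact hvA hy
    · rintro rfl
      exact huA hy
  have had := hP4.2.2.1
  refine hG.not_isP4_of_mem_s8 (e := d) (path a (by simp) hua hva) ?_ (path d (by simp) hud hvd)
    (by grind) (by simp)
  grind
end

section
/- Let G be a P4-sparse graph and let A be a set of four vertices inducing a P4 in G. Then there do not exist distinct vertices u, v in T(A) ∪ P(A) and a vertex x in I(A) such that the only edge of G among {u, v, x} is vx. -/
open SimpleGraph

variable {V : Type*}

/-- In a `P4`-sparse graph, a vertex `w` outside an induced path `a b c d` cannot form another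
induced path with some of its vertices. -/
lemma P4Sparse.not_isP4_of_subset {G : SimpleGraph V} (hG : P4Sparse G) {a b c d w p q r s : V}
    (h : IsP4 G a b c d) (hw : w ∉ ({a, b, c, d} : Set V))
    (hwB : w ∈ ({p, q, r, s} : Set V))
    (hB : ({p, q, r, s} : Set V) ⊆ insert w {a, b, c, d}) : ¬IsP4 G p q r s := by
  intro h'
  have hcard : (insert w {a, b, c, d} : Set V).ncard = 5 := by
    obtain ⟨hab, hac, had, hbc, hbd, hcd, -⟩ := h
    rw [Set.ncard_insert_of_notMem hw, Set.ncard_insert_of_notMem (by simp [hab, hac, had]),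
      Set.ncard_insert_of_notMem (by simp [hbc, hbd]), Set.ncard_pair hcd]
  have := hG _ hcard _ _ (Set.subset_insert _ _) hB ⟨a, b, c, d, h, rfl⟩ ⟨p, q, r, s, h', rfl⟩
  exact hw (this ▸ hwB)

/-- In a `P4`-sparse graph, a vertex with a neighbour on an induced path `a b c d` is adjacent to
the inner vertex `b`. -/
lemma P4Sparse.adj_inner {G : SimpleGraph V} (hG : P4Sparse G) {a b c d w : V}
    (h : IsP4 G a b c d) (hw : w ∉ ({a, b, c, d} : Set V))
    (hadj : G.Adj w a ∨ G.Adj w b ∨ G.Adj w c ∨ G.Adj w d) : G.Adj w b := by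
  by_contra hb
  have h₁ : ¬IsP4 G w c b a := hG.not_isP4_of_subset h hw (by simp) (by grind)
  have h₂ : ¬IsP4 G w d c b := hG.not_isP4_of_subset h hw (by simp) (by grind)
  have h₃ : ¬IsP4 G w a b c := hG.not_isP4_of_subset h hw (by simp) (by grind)
  have h₄ : ¬IsP4 G a w c d := hG.not_isP4_of_subset h hw (by simp) (by grind)
  have h₅ : ¬IsP4 G d w a b := hG.not_isP4_of_subset h hw (by simp) (by grind)
  simp only [Set.mem_insert_iff, Set.mem_singleton_iff] at hw
  grind [IsP4, G.adj_comm]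

/-- A vertex of `T(A) ∪ P(A)` lies outside `A` and has a neighbour in `A`. -/
lemma notMem_and_exists_adj_of_mem_tSet_union_pSet {G : SimpleGraph V} {A : Set V}
    (hA : A.Nonempty) {w : V} (hw : w ∈ tSet G A ∪ pSet G A) : w ∉ A ∧ ∃ y ∈ A, G.Adj w y := by
  rcases hw with ⟨hwA, hadj⟩ | ⟨hwA, hpos, -⟩
  · obtain ⟨y, hy⟩ := hA
    exact ⟨hwA, y, hy, hadj y hy⟩
  · obtain ⟨y, hwy, hy⟩ := Set.nonempty_of_ncard_ne_zero (Nat.one_le_iff_ne_zero.mp hpos)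
    exact ⟨hwA, y, hy, hwy⟩

/-- In a `P4`-sparse graph, a vertex of `T(A) ∪ P(A)` is adjacent to both inner vertices of the
path induced by `A`. -/
lemma P4Sparse.adj_inner_of_mem_tSet_union_pSet {G : SimpleGraph V} (hG : P4Sparse G)
    {a b c d w : V} (h : IsP4 G a b c d)
    (hw : w ∈ tSet G {a, b, c, d} ∪ pSet G {a, b, c, d}) : G.Adj w b ∧ G.Adj w c := by
  obtain ⟨hwA, y, hy, hwy⟩ :=
    notMem_and_exists_adj_of_mem_tSet_union_pSet (Set.insert_nonempty _ _) hw
  simp only [Set.mem_insert_iff, Set.mem_singleton_iff] at hy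
  exact ⟨hG.adj_inner h hwA (by grind), hG.adj_inner h.reverse (by grind) (by grind)⟩

/-- **Observation 2.3, complement form.** If `G` is `P4`-sparse and `A`
induces a `P4`, then there are no distinct `u, v ∈ T(A) ∪ P(A)` and `x ∈ I(A)` such that the
only edge of `G` among `{u, v, x}` is `vx`. -/
theorem p4Sparse_obs_2_3_compl (G : SimpleGraph V) (hG : P4Sparse G)
    (a b c d : V) (hP4 : IsP4 G a b c d) (A : Set V) (hA : A = {a, b, c, d}) :
    ¬∃ u v x : V, u ≠ v ∧ u ∈ tSet G A ∪ pSet G A ∧ v ∈ tSet G A ∪ pSet G A ∧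
      x ∈ iSet G A ∧ ¬G.Adj u v ∧ ¬G.Adj u x ∧ G.Adj v x := by
  subst hA
  rintro ⟨u, v, x, huv, hu, hv, ⟨hxA, hx⟩, huv', hux, hvx⟩
  obtain ⟨hub, huc⟩ := hG.adj_inner_of_mem_tSet_union_pSet hP4 hu
  obtain ⟨hvb, hvc⟩ := hG.adj_inner_of_mem_tSet_union_pSet hP4 hv
  have hxb : ¬G.Adj x b := hx b (by simp)
  have hxc : ¬G.Adj x c := hx c (by simp)
  have isP4_of_inner {y : V} (huy : G.Adj u y) (hvy : G.Adj v y) (hxy : ¬G.Adj x y) :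
      IsP4 G x v y u :=
    ⟨hvx.ne', fun e => hux (e ▸ huy), fun e => huv' (e ▸ hvx).symm, hvy.ne, huv.symm, huy.ne',
      hvx.symm, hvy, huy.symm, hxy, fun e => hux e.symm, fun e => huv' e.symm⟩
  have hxvbu : IsP4 G x v b u := isP4_of_inner hub hvb hxb
  refine hG.not_isP4_of_subset hxvbu (w := c) ?_ (by simp) (by grind) (isP4_of_inner huc hvc hxc)
  have hcx : c ≠ x := by grind
  simp [hcx, hvc.ne', huc.ne', hP4.2.2.2.1.symm]
end

section
/- Let G be a P4-sparse graph and let A be a set of four vertices inducing a P4 in G. Then there do not exist a vertex v in I(A) ∪ P(A) and distinct vertices x, y in T(A) such that the only edge of G among {v, x, y} is vx. -/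
open SimpleGraph

variable {V : Type*}

/-- In a `P4`-sparse graph, a `P4` has no companion `P4` using one further vertex. -/
lemma P4Sparse.not_induces_of_mem {G : SimpleGraph V} (hG : P4Sparse G) {a b c d v : V}
    (h : IsP4 G a b c d) (hv : v ∉ ({a, b, c, d} : Set V)) {B : Set V}
    (hB : InducesP4 G B) (hBs : B ⊆ insert v {a, b, c, d}) : v ∉ B := by
  have hcard : (insert v ({a, b, c, d} : Set V)).ncard = 5 := by
    obtain ⟨hab, hac, had, hbc, hbd, hcd, -⟩ := h
    rw [Set.ncard_insert_of_notMem hv, Set.ncard_insert_of_notMem (by simp [*]),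
      Set.ncard_insert_of_notMem (by simp [*]), Set.ncard_pair hcd]
  rw [← hG _ hcard _ B (Set.subset_insert _ _) hBs ⟨a, b, c, d, h, rfl⟩ hB]
  exact hv

/-- In a `P4`-sparse graph, a vertex outside a `P4` is not adjacent to exactly three of its
vertices: two nonneighbours exist as soon as one does. -/
lemma P4Sparse.exists_two_not_adj {G : SimpleGraph V} (hG : P4Sparse G) {a b c d v : V}
    (h : IsP4 G a b c d) (hv : v ∉ ({a, b, c, d} : Set V))
    (hnot : ∃ p ∈ ({a, b, c, d} : Set V), ¬G.Adj v p) :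
    ∃ p ∈ ({a, b, c, d} : Set V), ∃ q ∈ ({a, b, c, d} : Set V),
      p ≠ q ∧ ¬G.Adj v p ∧ ¬G.Adj v q := by
  by_contra! hcon
  have key : ∀ p q r : V, p ∈ ({a, b, c, d} : Set V) → q ∈ ({a, b, c, d} : Set V) →
      r ∈ ({a, b, c, d} : Set V) → ¬IsP4 G p q v r := by
    intro p q r hp hq hr hP
    refine hG.not_induces_of_mem h hv ⟨p, q, v, r, hP, rfl⟩ ?_ (by simp)
    rintro z (rfl | rfl | rfl | rfl)
    exacts [Or.inr hp, Or.inr hq, Or.inl rfl, Or.inr hr]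
  have hkabd := key a b d (by simp) (by simp) (by simp)
  have hkbad := key b a d (by simp) (by simp) (by simp)
  have hkcda := key c d a (by simp) (by simp) (by simp)
  have hkdca := key d c a (by simp) (by simp) (by simp)
  have hsymm : ∀ p q, G.Adj p q → G.Adj q p := fun _ _ hpq => hpq.symm
  simp only [IsP4, Set.mem_insert_iff, Set.mem_singleton_iff] at *
  obtain ⟨p, hp, hvp⟩ := hnot
  grind

/-- A vertex of `I(A) ∪ P(A)` has a nonneighbour in the `P4` on `A`. -/
lemma exists_not_adj_of_mem_iSet_union_pSet {G : SimpleGraph V} {a b c d v : V}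
    (h : IsP4 G a b c d) (hv : v ∈ iSet G {a, b, c, d} ∪ pSet G {a, b, c, d}) :
    ∃ p ∈ ({a, b, c, d} : Set V), ¬G.Adj v p := by
  rcases hv with hv | hv
  · exact ⟨a, by simp, hv.2 a (by simp)⟩
  · by_contra! hall
    have hle := hv.2.2
    rw [Set.inter_eq_right.2 (show _ ⊆ G.neighborSet v from hall)] at hle
    obtain ⟨hab, hac, had, hbc, hbd, hcd, -⟩ := h
    rw [Set.ncard_insert_of_notMem (by simp [*]),
      Set.ncard_insert_of_notMem (by simp [*]), Set.ncard_pair hcd] at hle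
    omega

/-- **Observation 2.4.** If `G` is `P4`-sparse and `A` induces a `P4`, then
there are no `v ∈ I(A) ∪ P(A)` and distinct `x, y ∈ T(A)` such that the only edge of `G`
among `{v, x, y}` is `vx`. -/
theorem p4Sparse_obs_2_4 (G : SimpleGraph V) (hG : P4Sparse G)
    (a b c d : V) (hP4 : IsP4 G a b c d) (A : Set V) (hA : A = {a, b, c, d}) :
    ¬∃ v x y : V, x ≠ y ∧ v ∈ iSet G A ∪ pSet G A ∧ x ∈ tSet G A ∧ y ∈ tSet G A ∧
      G.Adj v x ∧ ¬G.Adj v y ∧ ¬G.Adj x y := by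
  subst hA
  rintro ⟨v, x, y, hxy, hv, ⟨hxA, hx⟩, ⟨hyA, hy⟩, hvx, hvy, hnxy⟩
  have hvA : v ∉ ({a, b, c, d} : Set V) := hv.elim And.left And.left
  obtain ⟨p, hp, q, hq, hpq, hvp, hvq⟩ :=
    hG.exists_two_not_adj hP4 hvA (exists_not_adj_of_mem_iSet_union_pSet hP4 hv)
  have hvy_ne : v ≠ y := fun e => hnxy (e ▸ hvx).symm
  have hpath : ∀ r ∈ ({a, b, c, d} : Set V), ¬G.Adj v r → IsP4 G v x r y := fun r hr hvr =>
    ⟨hvx.ne, fun e => hvA (e ▸ hr), hvy_ne, (hx r hr).ne, hxy, (hy r hr).ne', hvx, hx r hr,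
      (hy r hr).symm, hvr, hvy, hnxy⟩
  refine hG.not_induces_of_mem (v := q) (hpath p hp hvp) ?_ ⟨v, x, q, y, hpath q hq hvq, rfl⟩ ?_
    (by simp)
  · rintro (rfl | rfl | rfl | rfl)
    exacts [hvA hq, hxA hq, hpq rfl, hyA hq]
  · rintro z (rfl | rfl | rfl | rfl) <;> simp
end

section
/- Let G be a P4-sparse graph and let A be a set of four vertices inducing a P4 in G. Then there do not exist vertices v in P(A), x in T(A), and y in I(A) such that the only edge of G among {v, x, y} is xy. -/
open SimpleGraph

variable {V : Type*}

/-- In a `P4`-sparse graph, adding one vertex to a `P4` creates no further `P4`. -/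
lemma P4Sparse.insert_eq {G : SimpleGraph V} (hG : P4Sparse G) {a b c d e p q r s : V}
    (h : IsP4 G a b c d) (he : e ∉ ({a, b, c, d} : Set V)) (h' : IsP4 G p q r s)
    (hsub : ({p, q, r, s} : Set V) ⊆ {e, a, b, c, d}) :
    ({p, q, r, s} : Set V) = {a, b, c, d} := by
  refine hG {e, a, b, c, d} ?_ _ _ hsub (Set.subset_insert _ _)
    ⟨p, q, r, s, h', rfl⟩ ⟨a, b, c, d, h, rfl⟩
  obtain ⟨hab, hac, had, hbc, hbd, hcd, -⟩ := h
  rw [Set.ncard_insert_of_notMem he, Set.ncard_insert_of_notMem (by simp [hab, hac, had]),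
    Set.ncard_insert_of_notMem (by simp [hbc, hbd]), Set.ncard_pair hcd]

/-- In a `P4`-sparse graph, a vertex outside a `P4` with a neighbor in it has a second one. -/
lemma P4Sparse.exists_two_neighbors {G : SimpleGraph V} (hG : P4Sparse G) {a b c d v p : V}
    (h : IsP4 G a b c d) (hv : v ∉ ({a, b, c, d} : Set V)) (hp : p ∈ ({a, b, c, d} : Set V))
    (hvp : G.Adj v p) : ∃ q ∈ ({a, b, c, d} : Set V), q ≠ p ∧ G.Adj v q := by
  by_contra! hu
  have key {p q r s : V} (h' : IsP4 G p q r s)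
      (hsub : ({p, q, r, s} : Set V) ⊆ {v, a, b, c, d}) : v ∉ ({p, q, r, s} : Set V) :=
    hG.insert_eq h hv h' hsub ▸ hv
  obtain ⟨hab, hac, had, hbc, hbd, hcd, eab, ebc, ecd, nac, nad, nbd⟩ := h
  simp only [Set.mem_insert_iff, Set.mem_singleton_iff, not_or] at hv hp hu
  obtain ⟨hva, hvb, hvc, hvd⟩ := hv
  rcases hp with rfl | rfl | rfl | rfl
  · refine key (p := v) (q := p) (r := b) (s := c) ?_ ?_ (by simp)
    · grind [IsP4]
    · grind
  · refine key (p := v) (q := p) (r := c) (s := d) ?_ ?_ (by simp)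
    · grind [IsP4]
    · grind
  · refine key (p := a) (q := b) (r := p) (s := v) ?_ ?_ (by simp)
    · grind [IsP4, SimpleGraph.adj_comm]
    · grind
  · refine key (p := b) (q := c) (r := p) (s := v) ?_ ?_ (by simp)
    · grind [IsP4, SimpleGraph.adj_comm]
    · grind

/-- **Observation 2.14.** If `G` is `P4`-sparse and `A` induces a `P4`, then
there are no `v ∈ P(A)`, `x ∈ T(A)`, `y ∈ I(A)` such that the only edge of `G` among
`{v, x, y}` is `xy`. -/
theorem p4Sparse_obs_2_14 (G : SimpleGraph V) (hG : P4Sparse G)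
    (a b c d : V) (hP4 : IsP4 G a b c d) (A : Set V) (hA : A = {a, b, c, d}) :
    ¬∃ v x y : V, v ∈ pSet G A ∧ x ∈ tSet G A ∧ y ∈ iSet G A ∧
      ¬G.Adj v x ∧ ¬G.Adj v y ∧ G.Adj x y := by
  subst hA
  rintro ⟨v, x, y, ⟨hv, hcard, -⟩, ⟨-, hxA⟩, ⟨hy, hyA⟩, hvx, hvy, hxy⟩
  obtain ⟨p, hvp, hp⟩ := Set.nonempty_of_ncard_ne_zero (Nat.one_le_iff_ne_zero.mp hcard)
  rw [SimpleGraph.mem_neighborSet] at hvp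
  obtain ⟨q, hq, hqp, hvq⟩ := hG.exists_two_neighbors hP4 hv hp hvp
  have path {w : V} (hw : w ∈ ({a, b, c, d} : Set V)) (hvw : G.Adj v w) : IsP4 G v w x y := by
    have hxw := hxA w hw
    have hyw := hyA w hw
    have hvx' : v ≠ x := fun h => hvy (h ▸ hxy)
    have hvy' : v ≠ y := fun h => hyw (h ▸ hvw)
    have hwy : w ≠ y := fun h => hy (h ▸ hw)
    exact ⟨hvw.ne, hvx', hvy', hxw.ne.symm, hwy, hxy.ne, hvw, hxw.symm, hxy, hvx, hvy,
      fun h => hyw h.symm⟩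
  have hqmem : q ∉ ({v, p, x, y} : Set V) := by
    obtain ⟨hvq', -, -, hqx, hqy, -⟩ := path hq hvq
    simp [hvq'.symm, hqp, hqx, hqy]
  have heq := hG.insert_eq (path hp hvp) hqmem (path hq hvq) (by grind)
  exact hqmem (heq ▸ by simp)
end

section
/- Let G be a P4-sparse graph and let A be a set of four vertices inducing a P4 in G. Then there do not exist vertices v in P(A), x in T(A), and y in I(A) such that the only edge of G among {v, x, y} is vy. -/
open SimpleGraph

variable {V : Type*}

/-- Two induced `P4`s of a `P4`-sparse graph that lie in a common five-vertex set coincide, so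
none of them can use a vertex `q` missed by the other. -/
theorem P4Sparse.not_mem_of_isP4 {G : SimpleGraph V} (hG : P4Sparse G) {a b c d q : V}
    (hP : IsP4 G a b c d) (hq : q ∉ ({a, b, c, d} : Set V)) {B : Set V}
    (hB : InducesP4 G B) (hBs : B ⊆ {q, a, b, c, d}) : q ∉ B := by
  have hcard : ({q, a, b, c, d} : Set V).ncard = 5 := by
    obtain ⟨hab, hac, had, hbc, hbd, hcd, -⟩ := hP
    rw [Set.ncard_insert_of_notMem hq, Set.ncard_insert_of_notMem (by simp [*]),
      Set.ncard_insert_of_notMem (by simp [*]), Set.ncard_pair hcd]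
  have h := hG _ hcard {a, b, c, d} B (Set.subset_insert _ _) hBs ⟨a, b, c, d, hP, rfl⟩ hB
  rwa [← h]

/-- Every vertex of an induced `P4` has a distinct non-neighbour in it. -/
theorem IsP4.exists_not_adj {G : SimpleGraph V} {a b c d p : V} (hP : IsP4 G a b c d)
    (hp : p ∈ ({a, b, c, d} : Set V)) :
    ∃ q ∈ ({a, b, c, d} : Set V), q ≠ p ∧ ¬G.Adj p q := by
  obtain ⟨-, hac, -, -, hbd, -, -, -, -, nac, -, nbd⟩ := hP
  rcases hp with rfl | rfl | rfl | rfl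
  · exact ⟨c, by simp, hac.symm, nac⟩
  · exact ⟨d, by simp, hbd.symm, nbd⟩
  · exact ⟨a, by simp, hac, fun h => nac h.symm⟩
  · exact ⟨b, by simp, hbd, fun h => nbd h.symm⟩

/-- **Fact 2.15.** If `G` is `P4`-sparse and `A` induces a `P4`, then there
are no `v ∈ P(A)`, `x ∈ T(A)`, `y ∈ I(A)` such that the only edge of `G` among `{v, x, y}`
is `vy`. -/
theorem p4Sparse_fact_2_15 (G : SimpleGraph V) (hG : P4Sparse G)
    (a b c d : V) (hP4 : IsP4 G a b c d) (A : Set V) (hA : A = {a, b, c, d}) :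
    ¬∃ v x y : V, v ∈ pSet G A ∧ x ∈ tSet G A ∧ y ∈ iSet G A ∧
      ¬G.Adj v x ∧ G.Adj v y ∧ ¬G.Adj x y := by
  rintro ⟨v, x, y, ⟨hvA, hv, -⟩, ⟨hxA, hx⟩, ⟨hyA, hy⟩, hvx, hvy, hxy⟩
  obtain ⟨p, hvp : G.Adj v p, hpA⟩ := Set.nonempty_of_ncard_ne_zero (Nat.one_le_iff_ne_zero.mp hv)
  obtain ⟨q, hqA, hqp, hpq⟩ : ∃ q ∈ A, q ≠ p ∧ ¬G.Adj p q := by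
    subst hA
    exact hP4.exists_not_adj hpA
  have hne {z w : V} (hz : z ∉ A) (hw : w ∈ A) : z ≠ w := fun h => hz (h ▸ hw)
  have hvx' : v ≠ x := fun h => hxy (h ▸ hvy)
  have hyx' : y ≠ x := fun h => hvx (h ▸ hvy)
  have path {w : V} (hw : w ∈ A) (hvw : G.Adj v w) : IsP4 G y v w x :=
    ⟨hvy.ne', hne hyA hw, hyx', hvw.ne, hvx', (hne hxA hw).symm, hvy.symm, hvw,
      (hx w hw).symm, hy w hw, fun h => hxy h.symm, hvx⟩
  have hq : q ∉ ({y, v, p, x} : Set V) := by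
    simp [hqp, (hne hyA hqA).symm, (hne hvA hqA).symm, (hne hxA hqA).symm]
  by_cases hvq : G.Adj v q
  · refine hG.not_mem_of_isP4 (path hpA hvp) hq ⟨y, v, q, x, path hqA hvq, rfl⟩ ?_ (by simp)
    simp [Set.insert_subset_iff]
  · refine hG.not_mem_of_isP4 (path hpA hvp) hq ⟨v, p, x, q, ?_, rfl⟩ ?_ (by simp)
    · exact ⟨hvp.ne, hvx', hne hvA hqA, (hne hxA hpA).symm, hqp.symm, hne hxA hqA, hvp,
        (hx p hpA).symm, hx q hqA, hvx, hvq, hpq⟩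
    · simp [Set.insert_subset_iff]
end

section
/- Let G be a P4-sparse graph and let A be a set of four vertices inducing a P4 in G. Then there do not exist vertices v in P(A), distinct x, y in T(A), and z in I(A) such that the edges of G among {v, x, y, z} are exactly vx, xy, and yz. -/
open SimpleGraph

variable {V : Type*}

/-- **Fact 2.15, four-vertex form.** If `G` is `P4`-sparse and `A` induces a
`P4`, then there are no `v ∈ P(A)`, distinct `x, y ∈ T(A)`, and `z ∈ I(A)` such that the
edges of `G` among `{v, x, y, z}` are exactly `vx`, `xy`, and `yz`. -/
theorem p4Sparse_fact_2_15_four (G : SimpleGraph V) (hG : P4Sparse G)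
    (a b c d : V) (hP4 : IsP4 G a b c d) (A : Set V) (hA : A = {a, b, c, d}) :
    ¬∃ v x y z : V, x ≠ y ∧ v ∈ pSet G A ∧ x ∈ tSet G A ∧ y ∈ tSet G A ∧ z ∈ iSet G A ∧
      G.Adj v x ∧ ¬G.Adj v y ∧ ¬G.Adj v z ∧ G.Adj x y ∧ ¬G.Adj x z ∧ G.Adj y z := by
  rintro ⟨v, x, y, z, hxy, ⟨-, hv, -⟩, ⟨-, hx⟩, ⟨-, hy⟩, ⟨hzA, hz⟩,
    hvx, hvy, hvz, hxy', hxz, hyz⟩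
  obtain ⟨w, hvw, hwA⟩ := Set.nonempty_of_ncard_ne_zero (Nat.one_le_iff_ne_zero.mp hv)
  rw [mem_neighborSet] at hvw
  have hxw := hx w hwA
  have hyw := hy w hwA
  have hzw := hz w hwA
  have hvz' : v ≠ z := fun h => hvy (h ▸ hyz.symm)
  have hvy' : v ≠ y := fun h => hvz (h ▸ hyz)
  have hxz' : x ≠ z := fun h => hvz (h ▸ hvx)
  have hwz' : w ≠ z := fun h => hzA (h ▸ hwA)
  -- `v, x, y, z` and `v, w, y, z` are both induced paths on the five vertices `v, x, w, y, z`.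
  have hcard : ({v, x, w, y, z} : Set V).ncard = 5 := by
    classical
    have h : ({v, x, w, y, z} : Set V) = (({v, x, w, y, z} : Finset V) : Set V) := by simp
    rw [h, Set.ncard_coe_finset]
    simp [hvx.ne, hvw.ne, hvy', hvz', hxw.ne, hxy, hxz', hyw.ne', hwz', hyz.ne]
  have heq := hG {v, x, w, y, z} hcard {v, x, y, z} {v, w, y, z}
    (by intro u; simp; tauto) (by intro u; simp; tauto)
    ⟨v, x, y, z, ⟨hvx.ne, hvy', hvz', hxy, hxz', hyz.ne, hvx, hxy', hyz, hvy, hvz, hxz⟩, rfl⟩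
    ⟨v, w, y, z, ⟨hvw.ne, hvy', hvz', hyw.ne', hwz', hyz.ne, hvw, hyw.symm, hyz, hvy, hvz,
      fun h => hzw h.symm⟩, rfl⟩
  have hmem : x ∈ ({v, w, y, z} : Set V) := heq ▸ by simp
  simp [hvx.ne', hxw.ne, hxy, hxz'] at hmem
end
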